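/- Let (𝒞, J) be a finitely complete category endowed with a Grothendieck topology, let C be an object of 𝒞, let A be a sieve on C, and let p : 1 → C be a point of C. Assume that for any two 𝔊-neighborhoods V and W of p there exists a 𝔊-neighborhood U of p with U ⊆ V ∩ W. Then p lies in the closure of A if and only if there exists a filter 𝔊 on 𝒞 such that A ∈ 𝔊(C) and 𝔊(C) converges to p. -/

import Mathlib

open CategoryTheory Limits

universe w v u

/-- A filter on a category: assigns to each object a collection of sieves that is
upward closed, closed under finite intersections, and omits the empty sieve. -/
structure CatFilter (𝒞 : Type u) [Category.{v} 𝒞] where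
  F : ∀ X : 𝒞, Set (Sieve X)
  /-- (F1) upward closure -/
  mono : ∀ {X : 𝒞} {S R : Sieve X}, S ∈ F X → S ≤ R → R ∈ F X
  /-- (F2) every finite intersection of members is a member -/
  finInter : ∀ {X : 𝒞} (T : Finset (Sieve X)), (∀ S ∈ T, S ∈ F X) → T.inf id ∈ F X
  /-- (F3) the empty sieve is not a member -/
  bot_not_mem : ∀ X : 𝒞, ⊥ ∉ F X

/-- A 𝔊-neighborhood of a point `p : 1 ⟶ X` with respect to a Grothendieck topology `J`:
a covering sieve containing a morphism through which `p` factors. -/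
def IsGNbhd {𝒞 : Type u} [Category.{v} 𝒞] [Limits.HasFiniteLimits 𝒞]
    (J : GrothendieckTopology 𝒞) {X : 𝒞} (p : ⊤_ 𝒞 ⟶ X) (V : Sieve X) : Prop :=
  V ∈ J X ∧ ∃ (D : 𝒞) (φ : D ⟶ X), V.arrows φ ∧ ∃ q : ⊤_ 𝒞 ⟶ D, q ≫ φ = p

/-- A cover-neighborhood of a point `p`: a sieve containing some 𝔊-neighborhood of `p`. -/
def IsCoverNbhd {𝒞 : Type u} [Category.{v} 𝒞] [Limits.HasFiniteLimits 𝒞]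
    (J : GrothendieckTopology 𝒞) {X : 𝒞} (p : ⊤_ 𝒞 ⟶ X) (S : Sieve X) : Prop :=
  ∃ V : Sieve X, IsGNbhd J p V ∧ V ≤ S

/-- Two sieves on the same object meet if some morphism belongs to both. -/
def Meets {𝒞 : Type u} [Category.{v} 𝒞] {X : 𝒞} (S T : Sieve X) : Prop :=
  ∃ (D : 𝒞) (f : D ⟶ X), S.arrows f ∧ T.arrows f

/-!
A sieve contains `p` as soon as `p` factors through one of its members, so the cover-neighborhoods
of `p` are exactly the covering sieves containing `p`, and these form a filter `𝒩` in the lattice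
of sieves on `C`. Every member of `𝒩` meets `A` exactly when the filter generated by `𝒩` and `A` is
proper, and a proper filter of sieves on `C` extends to a filter on `𝒞` by taking only the maximal
sieve at each other object.
-/

open Order

section Adjoin

variable {P : Type*} [SemilatticeInf P]

/-- The filter generated by a filter `F` of a meet-semilattice and one further element `a`. -/
def adjoinFilter (F : PFilter P) (a : P) : PFilter P :=
  IsPFilter.toPFilter (F := {x | ∃ y ∈ F, y ⊓ a ≤ x}) <| by
    refine .of_def ?_ ?_ ?_
    · obtain ⟨y, hy⟩ := F.nonempty
      exact ⟨y ⊓ a, y, hy, le_rfl⟩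
    · rintro x ⟨y, hy, hyx⟩ x' ⟨y', hy', hyx'⟩
      refine ⟨y ⊓ y' ⊓ a, ⟨y ⊓ y', PFilter.inf_mem hy hy', le_rfl⟩, ?_, ?_⟩
      · exact (inf_le_inf_right a inf_le_left).trans hyx
      · exact (inf_le_inf_right a inf_le_right).trans hyx'
    · rintro x x' hxx' ⟨y, hy, hyx⟩
      exact ⟨y, hy, hyx.trans hxx'⟩

theorem mem_adjoinFilter {F : PFilter P} {a x : P} :
    x ∈ adjoinFilter F a ↔ ∃ y ∈ F, y ⊓ a ≤ x :=
  Iff.rfl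

theorem le_adjoinFilter (F : PFilter P) (a : P) : F ≤ adjoinFilter F a :=
  fun y hy => mem_adjoinFilter.2 ⟨y, hy, inf_le_left⟩

theorem self_mem_adjoinFilter (F : PFilter P) (a : P) : a ∈ adjoinFilter F a :=
  let ⟨y, hy⟩ := F.nonempty
  mem_adjoinFilter.2 ⟨y, hy, inf_le_right⟩

theorem bot_notMem_adjoinFilter_iff [OrderBot P] {F : PFilter P} {a : P} :
    ⊥ ∉ adjoinFilter F a ↔ ∀ y ∈ F, y ⊓ a ≠ ⊥ := by
  simp only [mem_adjoinFilter, le_bot_iff, not_exists, not_and, ne_eq]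

end Adjoin

section CatFilter

variable {𝒞 : Type u} [Category.{v} 𝒞]

theorem meets_iff_inf_ne_bot {X : 𝒞} {S T : Sieve X} : Meets S T ↔ S ⊓ T ≠ ⊥ := by
  rw [ne_eq, ← le_bot_iff]
  constructor
  · rintro ⟨D, f, hS, hT⟩ hle
    exact hle f ⟨hS, hT⟩
  · intro hST
    by_contra hmeets
    exact hST fun D f hf => hmeets ⟨D, f, hf⟩

namespace CatFilter

/-- A filter on a category, assembled from an independent choice of a proper order-theoretic filter
in each lattice of sieves. -/
def ofPFilter (ℱ : ∀ X : 𝒞, PFilter (Sieve X)) (hℱ : ∀ X, ⊥ ∉ ℱ X) : CatFilter 𝒞 where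
  F X := ℱ X
  mono hS hSR := PFilter.mem_of_le hSR hS
  finInter {X} _ hT := Finset.inf_induction (p := (· ∈ ℱ X)) PFilter.top_mem
    (fun _ hS _ hR => PFilter.inf_mem hS hR) hT
  bot_not_mem := hℱ

theorem exists_F_eq {C : 𝒞} (F : PFilter (Sieve C)) (hF : ⊥ ∉ F) :
    ∃ 𝔊 : CatFilter 𝒞, 𝔊.F C = F := by
  classical
  let ℱ : ∀ X : 𝒞, PFilter (Sieve X) := Function.update (fun _ => PFilter.principal ⊤) C F
  have hℱ : ∀ X, ⊥ ∉ ℱ X :=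
    (Function.forall_update_iff _ fun X (G : PFilter (Sieve X)) => ⊥ ∉ G).2
      ⟨hF, fun X _ => by simp⟩
  exact ⟨ofPFilter ℱ hℱ, by simp [ofPFilter, ℱ]⟩

theorem inf_mem (𝔊 : CatFilter 𝒞) {X : 𝒞} {S R : Sieve X}
    (hS : S ∈ 𝔊.F X) (hR : R ∈ 𝔊.F X) : S ⊓ R ∈ 𝔊.F X := by
  classical
  simpa using 𝔊.finInter {S, R} (by simp [hS, hR])

theorem meets_of_mem (𝔊 : CatFilter 𝒞) {X : 𝒞} {S R : Sieve X}
    (hS : S ∈ 𝔊.F X) (hR : R ∈ 𝔊.F X) : Meets S R :=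
  meets_iff_inf_ne_bot.2 fun hbot => 𝔊.bot_not_mem X (hbot ▸ 𝔊.inf_mem hS hR)

end CatFilter

theorem mem_closure_iff_exists_convergent_filter_general {C : 𝒞} (𝒩 : PFilter (Sieve C))
    (A : Sieve C) :
    (∀ S ∈ 𝒩, Meets S A) ↔ ∃ 𝔊 : CatFilter 𝒞, A ∈ 𝔊.F C ∧ ∀ S ∈ 𝒩, S ∈ 𝔊.F C := by
  constructor
  · intro hA
    have hproper : ⊥ ∉ adjoinFilter 𝒩 A :=
      bot_notMem_adjoinFilter_iff.2 fun S hS => meets_iff_inf_ne_bot.1 (hA S hS)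
    obtain ⟨𝔊, h𝔊⟩ := CatFilter.exists_F_eq (adjoinFilter 𝒩 A) hproper
    refine ⟨𝔊, ?_, fun S hS => ?_⟩ <;> rw [h𝔊]
    · exact self_mem_adjoinFilter 𝒩 A
    · exact le_adjoinFilter 𝒩 A hS
  · rintro ⟨𝔊, hA, h𝒩⟩ S hS
    exact 𝔊.meets_of_mem (h𝒩 S hS) hA

end CatFilter

section CoverNbhd

variable {𝒞 : Type u} [Category.{v} 𝒞] [HasFiniteLimits 𝒞] (J : GrothendieckTopology 𝒞)
  {X : 𝒞} (p : ⊤_ 𝒞 ⟶ X)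

theorem isGNbhd_iff {V : Sieve X} : IsGNbhd J p V ↔ V ∈ J X ∧ V p := by
  refine and_congr_right fun _ => ⟨?_, fun hp => ⟨_, p, hp, 𝟙 _, Category.id_comp p⟩⟩
  rintro ⟨D, φ, hφ, q, rfl⟩
  exact V.downward_closed hφ q

theorem isCoverNbhd_iff {S : Sieve X} : IsCoverNbhd J p S ↔ S ∈ J X ∧ S p := by
  simp only [IsCoverNbhd, isGNbhd_iff]
  constructor
  · rintro ⟨V, ⟨hV, hp⟩, hVS⟩
    exact ⟨J.superset_covering hVS hV, hVS p hp⟩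
  · exact fun hS => ⟨S, hS, le_rfl⟩

/-- The collection `𝒩_p(X)` of cover-neighborhoods of the point `p`, as a filter in the lattice of
sieves on `X`. -/
def coverNbhdFilter : PFilter (Sieve X) :=
  IsPFilter.toPFilter (F := {S | IsCoverNbhd J p S}) <| by
    simp only [isCoverNbhd_iff]
    refine .of_def ⟨⊤, J.top_mem X, trivial⟩ ?_ ?_
    · rintro S ⟨hS, hpS⟩ T ⟨hT, hpT⟩
      exact ⟨S ⊓ T, ⟨J.intersection_covering hS hT, hpS, hpT⟩, inf_le_left, inf_le_right⟩
    · rintro S T hST ⟨hS, hpS⟩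
      exact ⟨J.superset_covering hST hS, hST p hpS⟩

theorem mem_coverNbhdFilter {S : Sieve X} : S ∈ coverNbhdFilter J p ↔ IsCoverNbhd J p S :=
  Iff.rfl

end CoverNbhd

/-- A point lies in the closure of a sieve A iff there is a filter containing A (at C)
that converges to the point, assuming 𝔊-neighborhoods of the point are downward directed. -/
theorem mem_closure_iff_exists_convergent_filter
    {𝒞 : Type u} [Category.{v} 𝒞] [Limits.HasFiniteLimits 𝒞]
    (J : GrothendieckTopology 𝒞) (C : 𝒞) (A : Sieve C) (p : ⊤_ 𝒞 ⟶ C)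
    (hdir : ∀ V W : Sieve C, IsGNbhd J p V → IsGNbhd J p W →
      ∃ U : Sieve C, IsGNbhd J p U ∧ U ≤ V ⊓ W) :
    (∀ S : Sieve C, IsCoverNbhd J p S → Meets S A) ↔
    ∃ 𝔊 : CatFilter 𝒞, A ∈ 𝔊.F C ∧ (∀ S : Sieve C, IsCoverNbhd J p S → S ∈ 𝔊.F C) := by
  simpa only [mem_coverNbhdFilter] using
    mem_closure_iff_exists_convergent_filter_general (coverNbhdFilter J p) A
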